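/- Let K be a number field, σ a ℚ-algebra automorphism of K, q an odd integer greater than 1, and π ∈ O_K an element satisfying π·σ(π) = q. If K has a prime ideal 𝔮 of absolute norm 2, then N_{K/ℚ}(π − 1) is even. -/

import Mathlib

/-! Since `π` divides the odd integer `q` in `𝓞 K`, it is nonzero in the residue field of `𝔮`,
which is `𝔽₂`. Hence `π - 1 ∈ 𝔮`, and `N(𝔮) = 2` divides `N(π - 1)`. -/

open NumberField

/-- Let `K` be a number field with a `ℚ`-algebra automorphism `σ`,
`q` an odd integer `> 1`, and `π ∈ O_K` with `π·σ(π) = q`. If `K` has a prime ideal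
of absolute norm `2`, then `N_{K/ℚ}(π − 1)` is even. -/
theorem stmt_6 (K : Type*) [Field K] [NumberField K]
    (σ : K ≃ₐ[ℚ] K) (q : ℤ) (hq : Odd q) (hq1 : 1 < q)
    (π : 𝓞 K) (hπ : (π : K) * σ (π : K) = (q : K))
    (𝔮 : Ideal (𝓞 K)) (h𝔮 : 𝔮.IsPrime) (hn : Ideal.absNorm 𝔮 = 2) :
    Even (Algebra.norm ℤ (π - 1)) := by
  have h2 : (2 : 𝓞 K) ∈ 𝔮 := by
    have h := Ideal.absNorm_mem 𝔮
    rw [hn] at h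
    exact_mod_cast h
  have hπ𝔮 : π ∉ 𝔮 := by
    intro hmem
    let s : 𝓞 K := ⟨σ (π : K), (RingOfIntegers.isIntegral_coe π).map (σ.toAlgHom.restrictScalars ℤ)⟩
    have hs : π * s = (q : 𝓞 K) := by
      apply RingOfIntegers.ext
      change algebraMap (𝓞 K) K (π * s) = algebraMap (𝓞 K) K (q : 𝓞 K)
      rw [map_mul, map_intCast]
      exact hπ
    have hq𝔮 : (q : 𝓞 K) ∈ 𝔮 := hs ▸ 𝔮.mul_mem_right s hmem
    obtain ⟨k, rfl⟩ := hq
    push_cast at hq𝔮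
    exact h𝔮.one_notMem ((𝔮.add_mem_iff_right (𝔮.mul_mem_right _ h2)).1 hq𝔮)
  have hcard : Nat.card (𝓞 K ⧸ 𝔮) = 2 := hn
  obtain ⟨y, -, hy⟩ := (Nat.card_eq_two_iff' (0 : 𝓞 K ⧸ 𝔮)).1 hcard
  have h1 : π - 1 ∈ 𝔮 := by
    rw [← Ideal.Quotient.eq]
    refine (hy _ ?_).trans (hy _ ?_).symm
    · exact mt Ideal.Quotient.eq_zero_iff_mem.1 hπ𝔮
    · exact mt Ideal.Quotient.eq_zero_iff_mem.1 h𝔮.one_notMem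
  have h := Ideal.absNorm_dvd_norm_of_mem h1
  rw [hn] at h
  exact even_iff_two_dvd.2 (by exact_mod_cast h)
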